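/- arXiv:2309.11229 — 2 statements merged into one kernel-verified Lean document; each statement's English description precedes it below -/
import Mathlib

section
/- Let r be an odd positive integer, n = 2r, f : F → 𝔽₂ defined by f(x) = tr(x^{2^r + 3}), and let K = {x ∈ F : x^{2^r} = x} be the subfield of F with 2^r elements. For every a ∈ F with a ≠ 0: if a ∈ K, then the linear kernel E_{D_a f} has cardinality 2^{r+1}; if a ∉ K, then E_{D_a f} has cardinality 4. -/
noncomputable section

/-- `Fq n` is the finite field with `2 ^ n` elements. -/
abbrev Fq (n : ℕ) : Type := GaloisField 2 n

/-- The absolute trace map `tr x = x + x^2 + x^4 + ⋯ + x^(2^(n-1))` from `Fq n` to `𝔽₂`. -/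
def tr {n : ℕ} (x : Fq n) : ZMod 2 := Algebra.trace (ZMod 2) (Fq n) x

/-- The derivative of `f` with respect to `a`. -/
def der {n : ℕ} (f : Fq n → ZMod 2) (a : Fq n) : Fq n → ZMod 2 :=
  fun x => f x + f (x + a)

/-- Iterated derivatives along a list of directions (head applied last/outermost). -/
def derIter {n : ℕ} (f : Fq n → ZMod 2) : List (Fq n) → (Fq n → ZMod 2)
  | [] => f
  | a :: as => der (derIter f as) a

/-- `g` has algebraic degree at most `r`: all `(r+1)`-th order derivatives vanish. -/
def degLE {n : ℕ} (g : Fq n → ZMod 2) (r : ℕ) : Prop :=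
  ∀ l : List (Fq n), l.length = r + 1 → derIter g l = fun _ => 0

/-- Hamming distance between two Boolean functions on `Fq n`. -/
def hdist {n : ℕ} (f g : Fq n → ZMod 2) : ℕ :=
  {x : Fq n | f x ≠ g x}.ncard

/-- The `r`-th order nonlinearity of `f`. -/
def nl {n : ℕ} (r : ℕ) (f : Fq n → ZMod 2) : ℕ :=
  sInf {d : ℕ | ∃ g : Fq n → ZMod 2, degLE g r ∧ d = hdist f g}

/-- The linear kernel of `f`: directions along which the derivative is constant. -/
def linKer {n : ℕ} (f : Fq n → ZMod 2) : Set (Fq n) :=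
  {b | ∃ c : ZMod 2, ∀ x, der f b x = c}

/-- The weight of a Boolean function on `Fq n`. -/
def wt {n : ℕ} (f : Fq n → ZMod 2) : ℕ := {x : Fq n | f x = 1}.ncard

/-!
Put `σ x = x ^ 2 ^ r`, an involution of `F` with fixed field `K`, and `T x = x + σ x`, so that
`f x = tr (σ x * x ^ 3)` is cubic. Moving `σ` and squares across the trace gives
`D_b D_a f x = D_b D_a f 0 + tr (x ^ 2 * L_a b)` for an additive map `L_a`, so the linear kernel of
`D_a f` is the kernel of `L_a`. As `L_a b` has the form `z ^ 2 + T w` with `T w ∈ K`, its vanishing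
puts `z` in `K`, and `T z = T a * T b * (T a + T b)`. Hence `L_a b = 0` forces `a`, `b` or
`a + b` to lie in `K`. If `a ∈ K`, then `L_a b = a ^ 2 * T b ^ 4 + a * T b`, whose zeros are the two
fibres of `T` over `0` and the unique cube root of `a⁻¹` in `K`. If `a ∉ K`, then
`L_a (a + b) = L_a b` leaves `b ∈ K`, where `L_a b = b ^ 2 * T a ^ 4 + b * T a`.
-/

theorem ncard_preimage_eq_mul_card_ker {G H : Type*} [AddGroup G] [AddGroup H] (φ : G →+ H)
    {S : Set H} (hS : S ⊆ Set.range φ) : (φ ⁻¹' S).ncard = S.ncard * Nat.card φ.ker := by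
  choose lift φ_lift using fun y : S => hS y.2
  let e : S × φ.ker ≃ φ ⁻¹' S :=
    { toFun := fun p => ⟨lift p.1 + p.2, by simp [φ_lift, φ.mem_ker.1 p.2.2]⟩
      invFun := fun x => (⟨φ x, x.2⟩, ⟨-lift ⟨φ x, x.2⟩ + x, by simp [φ.mem_ker, φ_lift]⟩)
      left_inv := fun p => by simp [φ_lift, φ.mem_ker.1 p.2.2]
      right_inv := fun x => by simp }
  rw [← Nat.card_coe_set_eq, ← Nat.card_coe_set_eq, ← Nat.card_prod, Nat.card_congr e]

theorem existsUnique_mul_pow_eq_one {K : Type*} [GroupWithZero K] {k : ℕ} (hk : k ≠ 0)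
    (hcop : (Nat.card K - 1).Coprime k) {a : K} (ha : a ≠ 0) : ∃! x : K, a * x ^ k = 1 := by
  have hbij : Function.Bijective fun u : Kˣ => u ^ k :=
    Nat.Coprime.pow_left_bijective (by rwa [Nat.card_units])
  obtain ⟨u, hu, huniq⟩ := hbij.existsUnique (Units.mk0 a ha)⁻¹
  refine ⟨u, ?_, fun x hx => ?_⟩
  · have u_pow : (u : K) ^ k = a⁻¹ := by simpa using congrArg Units.val hu
    simp only [u_pow, mul_inv_cancel₀ ha]
  · have hx0 : x ≠ 0 := by
      rintro rfl
      simp [hk] at hx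
    rw [← huniq (Units.mk0 x hx0) (Units.ext (by simpa using eq_inv_of_mul_eq_one_right hx)),
      Units.val_mk0]

theorem coprime_two_pow_sub_one_three {r : ℕ} (hr : Odd r) : (2 ^ r - 1).Coprime 3 := by
  have hmod : 2 ^ r % 3 = 2 := by
    obtain ⟨k, rfl⟩ := hr
    simp [pow_succ, pow_mul, Nat.mul_mod, Nat.pow_mod]
  rw [Nat.coprime_comm, Nat.prime_three.coprime_iff_not_dvd]
  generalize 2 ^ r = q at hmod ⊢
  omega

section RelTrace

variable {R : Type*} [Ring R]

/-- The relative trace `x ↦ x + σ x` of a ring endomorphism `σ`; when `σ` is an involution, its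
values are fixed by `σ`. -/
def relTrace (σ : R →+* R) : R →+ R := AddMonoidHom.id R + σ.toAddMonoidHom

theorem relTrace_apply (σ : R →+* R) (x : R) : relTrace σ x = x + σ x := rfl

theorem map_relTrace {σ : R →+* R} (hσ : Function.Involutive σ) (x : R) :
    σ (relTrace σ x) = relTrace σ x := by
  rw [relTrace_apply, map_add, hσ, add_comm]

theorem relTrace_eq_zero_iff [CharP R 2] {σ : R →+* R} {x : R} :
    relTrace σ x = 0 ↔ σ x = x := by
  rw [relTrace_apply, CharTwo.add_eq_zero, eq_comm]

variable {F : Type*} [DivisionRing F] {σ : F →+* F}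

theorem map_inv_relTrace_pow (hσ : Function.Involutive σ) (a : F) (k : ℕ) :
    σ (relTrace σ a ^ k)⁻¹ = (relTrace σ a ^ k)⁻¹ := by
  rw [map_inv₀, map_pow, map_relTrace hσ]

variable [CharP F 2]

theorem range_relTrace_eq_ker (hσ : Function.Involutive σ) (hne : σ ≠ RingHom.id F) :
    (relTrace σ).range = (relTrace σ).ker := by
  apply le_antisymm
  · rintro _ ⟨x, rfl⟩
    exact relTrace_eq_zero_iff.2 (map_relTrace hσ x)
  · intro s hs
    have hs : σ s = s := relTrace_eq_zero_iff.1 hs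
    obtain ⟨a, ha⟩ : ∃ a, σ a ≠ a := by
      contrapose! hne
      exact RingHom.ext hne
    have ht : relTrace σ a ≠ 0 := mt relTrace_eq_zero_iff.1 ha
    refine ⟨s / relTrace σ a * a, ?_⟩
    rw [relTrace_apply, map_mul, map_div₀, hs, map_relTrace hσ, ← mul_add, ← relTrace_apply,
      div_mul_cancel₀ _ ht]

theorem card_ker_relTrace_sq (hσ : Function.Involutive σ) (hne : σ ≠ RingHom.id F) :
    Nat.card (relTrace σ).ker ^ 2 = Nat.card F := by
  rw [← AddSubgroup.card_mul_index (relTrace σ).ker, AddSubgroup.index_ker,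
    range_relTrace_eq_ker hσ hne, sq]

end RelTrace

section IterateFrobenius

variable {F : Type*} [Field F] [Finite F] {p r : ℕ}

theorem iterateFrobenius_involutive [ExpChar F p] (hF : Nat.card F = p ^ (2 * r)) :
    Function.Involutive (iterateFrobenius F p r) := by
  intro x
  have := Fintype.ofFinite F
  rw [← iterateFrobenius_add_apply, iterateFrobenius_def, ← two_mul, ← hF,
    Nat.card_eq_fintype_card, FiniteField.pow_card]

theorem iterateFrobenius_ne_id [Fact p.Prime] [CharP F p] (hr : r ≠ 0) (hF : p ^ r < Nat.card F) :
    iterateFrobenius F p r ≠ RingHom.id F := by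
  intro h
  have := Fintype.ofFinite F
  have hp : 1 < p := (Fact.out : p.Prime).one_lt
  apply FiniteField.X_pow_card_pow_sub_X_ne_zero F hr hp
  refine Polynomial.eq_zero_of_natDegree_lt_card_of_eval_eq_zero _ Function.injective_id
    (fun x => ?_) ?_
  · have pow_eq : x ^ p ^ r = x := RingHom.congr_fun h x
    simp [pow_eq]
  · rwa [FiniteField.X_pow_card_pow_sub_X_natDegree_eq F hr hp, ← Nat.card_eq_fintype_card]

theorem card_ker_relTrace_iterateFrobenius [CharP F 2] (hr : r ≠ 0)
    (hF : Nat.card F = 2 ^ (2 * r)) : Nat.card (relTrace (iterateFrobenius F 2 r)).ker = 2 ^ r := by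
  have hne : iterateFrobenius F 2 r ≠ RingHom.id F :=
    iterateFrobenius_ne_id hr (hF ▸ Nat.pow_lt_pow_right one_lt_two (by omega))
  have card_sq := card_ker_relTrace_sq (iterateFrobenius_involutive hF) hne
  rw [hF, pow_mul'] at card_sq
  exact Nat.pow_left_injective two_ne_zero card_sq

end IterateFrobenius

section PolarMap

variable {R : Type*} [CommRing R] [CharP R 2] (σ : R →+* R)

theorem map_mul_pow_three_polarization (a b x : R) :
    σ x * x ^ 3 + σ (x + a) * (x + a) ^ 3 + (σ (x + b) * (x + b) ^ 3 +
        σ (x + b + a) * (x + b + a) ^ 3) =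
      σ 0 * 0 ^ 3 + σ a * a ^ 3 + (σ b * b ^ 3 + σ (b + a) * (b + a) ^ 3) +
        (x ^ 2 * (σ a * b + σ b * a) + x * (σ a * b ^ 2 + σ b * a ^ 2) +
          σ x * (a * b ^ 2 + b * a ^ 2)) := by
  have cube (y : R) : y ^ 3 = y ^ 2 * y := pow_succ y 2
  simp only [cube, CharTwo.add_sq, map_add, map_zero]
  grind [CharTwo.two_eq_zero (R := R)]

/-- The additive map `L_a` representing the second derivatives of the cubic `tr (σ x * x ^ 3)`:
polarizing this cubic gives the trilinear form `(x, a, b) ↦ tr (x ^ 2 * polarMap σ a b)`. -/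
def polarMap (a : R) : R →+ R where
  toFun b := (σ a * relTrace σ b ^ 2 + σ b * relTrace σ a ^ 2) ^ 2 + (σ a * b + σ b * a)
  map_zero' := by simp
  map_add' b c := by
    simp only [map_add, CharTwo.add_sq, mul_add, add_mul]
    ring

theorem polarMap_apply (a b : R) : polarMap σ a b =
    (σ a * relTrace σ b ^ 2 + σ b * relTrace σ a ^ 2) ^ 2 + (σ a * b + σ b * a) := rfl

theorem polarMap_self (a : R) : polarMap σ a a = 0 := by
  simp [polarMap_apply, CharTwo.add_self_eq_zero]

theorem polarMap_self_add (a b : R) : polarMap σ a (a + b) = polarMap σ a b := by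
  rw [map_add, polarMap_self, zero_add]

variable {σ} {a b : R}

theorem polarMap_of_map_eq_left (ha : σ a = a) :
    polarMap σ a b = a ^ 2 * relTrace σ b ^ 4 + a * relTrace σ b := by
  rw [polarMap_apply, relTrace_eq_zero_iff.2 ha, ha, relTrace_apply]
  ring

theorem polarMap_of_map_eq_right (hb : σ b = b) :
    polarMap σ a b = b ^ 2 * relTrace σ a ^ 4 + b * relTrace σ a := by
  rw [polarMap_apply, relTrace_eq_zero_iff.2 hb, hb, relTrace_apply]
  ring

theorem relTrace_mul_of_polarMap_eq_zero [IsReduced R] (hσ : Function.Involutive σ)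
    (h : polarMap σ a b = 0) :
    relTrace σ a * relTrace σ b * (relTrace σ a + relTrace σ b) = 0 := by
  set z := σ a * relTrace σ b ^ 2 + σ b * relTrace σ a ^ 2 with hz
  have sq_eq : z ^ 2 = relTrace σ (σ a * b) := by
    rw [relTrace_apply, map_mul, hσ, mul_comm a]
    exact CharTwo.add_eq_zero.1 h
  have map_z : σ z = z := by
    apply frobenius_inj R 2
    rw [frobenius_def, frobenius_def, ← map_pow, sq_eq, map_relTrace hσ]
  have relTrace_z : relTrace σ z =
      relTrace σ a * relTrace σ b * (relTrace σ a + relTrace σ b) := by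
    rw [relTrace_apply, hz]
    simp only [map_add, map_mul, map_pow, map_relTrace hσ, hσ a, hσ b]
    rw [relTrace_apply, relTrace_apply]
    ring
  rw [← relTrace_z, relTrace_eq_zero_iff.2 map_z]

theorem sq_mul_pow_four_add_mul_eq_zero_iff [NoZeroDivisors R] {u v : R} :
    u ^ 2 * v ^ 4 + u * v = 0 ↔ u = 0 ∨ v = 0 ∨ u * v ^ 3 = 1 := by
  have factor : u ^ 2 * v ^ 4 + u * v = u * v * (u * v ^ 3 + 1) := by ring
  rw [factor, mul_eq_zero, mul_eq_zero, CharTwo.add_eq_zero, or_assoc]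

end PolarMap

section PolarMapKernel

variable {F : Type*} [Field F] [CharP F 2] {σ : F →+* F} {a : F}

theorem polarMap_eq_zero_iff_of_map_eq_right {b : F} (ha : σ a ≠ a) (hb : σ b = b) :
    polarMap σ a b = 0 ↔ b = 0 ∨ b = (relTrace σ a ^ 3)⁻¹ := by
  have ht : relTrace σ a ≠ 0 := mt relTrace_eq_zero_iff.1 ha
  rw [polarMap_of_map_eq_right hb, sq_mul_pow_four_add_mul_eq_zero_iff, or_iff_right ht,
    mul_eq_one_iff_eq_inv₀ (pow_ne_zero 3 ht)]

theorem coe_ker_polarMap_of_map_ne (hσ : Function.Involutive σ) (ha : σ a ≠ a) :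
    ((polarMap σ a).ker : Set F) =
      {0, (relTrace σ a ^ 3)⁻¹, a, a + (relTrace σ a ^ 3)⁻¹} := by
  have ht : relTrace σ a ≠ 0 := mt relTrace_eq_zero_iff.1 ha
  have ker_of_fixed {b : F} (hb : σ b = b) := polarMap_eq_zero_iff_of_map_eq_right ha hb
  have hc := (ker_of_fixed (map_inv_relTrace_pow hσ a 3)).2 (Or.inr rfl)
  ext b
  simp only [SetLike.mem_coe, AddMonoidHom.mem_ker, Set.mem_insert_iff, Set.mem_singleton_iff]
  constructor
  · intro h
    rcases mul_eq_zero.1 (relTrace_mul_of_polarMap_eq_zero hσ h) with hab | hab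
    · have hb : σ b = b := relTrace_eq_zero_iff.1 ((mul_eq_zero.1 hab).resolve_left ht)
      rcases (ker_of_fixed hb).1 h with hb | hb
      · exact Or.inl hb
      · exact Or.inr (Or.inl hb)
    · have hb : σ (a + b) = a + b := relTrace_eq_zero_iff.1 ((map_add _ a b).trans hab)
      rw [← polarMap_self_add] at h
      rcases (ker_of_fixed hb).1 h with hb | hb
      · exact Or.inr (Or.inr (Or.inl (CharTwo.add_eq_zero.1 hb).symm))
      · refine Or.inr (Or.inr (Or.inr ?_))
        rw [← hb, CharTwo.add_cancel_left]
  · rintro (rfl | rfl | rfl | rfl)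
    · exact map_zero _
    · exact hc
    · exact polarMap_self σ b
    · exact (polarMap_self_add σ a _).trans hc

theorem ncard_ker_polarMap_of_map_ne (hσ : Function.Involutive σ) (ha : σ a ≠ a) :
    ((polarMap σ a).ker : Set F).ncard = 4 := by
  rw [coe_ker_polarMap_of_map_ne hσ ha]
  set c := (relTrace σ a ^ 3)⁻¹ with c_def
  have hc0 : c ≠ 0 := inv_ne_zero (pow_ne_zero 3 (mt relTrace_eq_zero_iff.1 ha))
  have hac : a ≠ c := by
    intro h
    exact ha (by rw [h, c_def, map_inv_relTrace_pow hσ])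
  have ha0 : a ≠ 0 := by
    rintro rfl
    exact ha (map_zero σ)
  have hadd : a + c ≠ 0 := mt CharTwo.add_eq_zero.1 hac
  rw [Set.ncard_insert_of_notMem (by simp [hc0.symm, ha0.symm, hadd.symm]),
    Set.ncard_insert_of_notMem (by simp [hac.symm, ha0]), Set.ncard_pair (by simp [hc0])]

theorem exists_ker_polarMap_eq_preimage (hσ : Function.Involutive σ)
    (hcop : (Nat.card (relTrace σ).ker - 1).Coprime 3) (ha0 : a ≠ 0) (ha : σ a = a) :
    ∃ s, s ≠ 0 ∧ σ s = s ∧ ((polarMap σ a).ker : Set F) = relTrace σ ⁻¹' {0, s} := by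
  let K : Subfield F := σ.eqLocusField (RingHom.id F)
  have card_K : Nat.card K = Nat.card (relTrace σ).ker :=
    Nat.card_congr (Equiv.subtypeEquivRight fun _ => relTrace_eq_zero_iff.symm)
  obtain ⟨s, hs, s_unique⟩ := existsUnique_mul_pow_eq_one (a := (⟨a, ha⟩ : K)) three_ne_zero
    (card_K ▸ hcop) (fun h => ha0 (congrArg Subtype.val h))
  have hs : a * (s : F) ^ 3 = 1 := congrArg Subtype.val hs
  refine ⟨s, ?_, s.2, ?_⟩
  · rintro hs0
    simp [hs0] at hs
  · ext b
    simp only [SetLike.mem_coe, AddMonoidHom.mem_ker, Set.mem_preimage, Set.mem_insert_iff,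
      Set.mem_singleton_iff]
    rw [polarMap_of_map_eq_left ha, sq_mul_pow_four_add_mul_eq_zero_iff, or_iff_right ha0]
    refine or_congr_right ⟨fun h => ?_, fun h => h ▸ hs⟩
    exact congrArg Subtype.val
      (s_unique ⟨relTrace σ b, map_relTrace hσ b⟩ (Subtype.ext h))

theorem ncard_ker_polarMap_of_map_eq (hσ : Function.Involutive σ) (hne : σ ≠ RingHom.id F)
    (hcop : (Nat.card (relTrace σ).ker - 1).Coprime 3) (ha0 : a ≠ 0) (ha : σ a = a) :
    ((polarMap σ a).ker : Set F).ncard = 2 * Nat.card (relTrace σ).ker := by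
  obtain ⟨s, hs0, hs, hker⟩ := exists_ker_polarMap_eq_preimage hσ hcop ha0 ha
  have hsub : {0, s} ⊆ Set.range (relTrace σ) := by
    rw [← AddMonoidHom.coe_range, range_relTrace_eq_ker hσ hne]
    rintro x (rfl | rfl)
    · exact zero_mem _
    · exact relTrace_eq_zero_iff.2 hs
  rw [hker, ncard_preimage_eq_mul_card_ker _ hsub, Set.ncard_pair hs0.symm]

end PolarMapKernel

section LinearKernel

variable {n : ℕ}

theorem tr_zero : tr (0 : Fq n) = 0 := map_zero _

theorem tr_add (x y : Fq n) : tr (x + y) = tr x + tr y := map_add _ x y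

theorem tr_map (σ : Fq n →+* Fq n) (x : Fq n) : tr (σ x) = tr x := by
  let σ' : Fq n →ₐ[ZMod 2] Fq n :=
    { σ with commutes' := RingHom.congr_fun (RingHom.ext_zmod (σ.comp (algebraMap _ _)) _) }
  exact Algebra.trace_eq_of_algEquiv (AlgEquiv.ofBijective σ' σ'.bijective) x

theorem tr_sq (x : Fq n) : tr (x ^ 2) = tr x := tr_map (frobenius (Fq n) 2) x

theorem eq_zero_of_forall_tr_mul_eq_zero {m : Fq n} (h : ∀ x, tr (x * m) = 0) : m = 0 :=
  (traceForm_nondegenerate (ZMod 2) (Fq n)).2 m h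

theorem mem_linKer_iff_of_der_eq_add_tr {g : Fq n → ZMod 2} {b m : Fq n} {c : ZMod 2}
    {φ : Fq n → Fq n} (hφ : Function.Surjective φ) (h : ∀ x, der g b x = c + tr (φ x * m)) :
    b ∈ linKer g ↔ m = 0 := by
  constructor
  · rintro ⟨d, hd⟩
    have tr_const (y : Fq n) : tr (y * m) = d - c := by
      obtain ⟨x, rfl⟩ := hφ y
      rw [← hd x, h, add_sub_cancel_left]
    have const_eq_zero : d - c = 0 := by
      rw [← tr_const 0, zero_mul, tr_zero]
    exact eq_zero_of_forall_tr_mul_eq_zero fun y => (tr_const y).trans const_eq_zero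
  · rintro rfl
    refine ⟨c, fun x => ?_⟩
    rw [h, mul_zero, tr_zero, add_zero]

theorem tr_sq_mul_polarMap {σ : Fq n →+* Fq n} (hσ : Function.Involutive σ) (a b x : Fq n) :
    tr (x ^ 2 * polarMap σ a b) = tr (x ^ 2 * (σ a * b + σ b * a)) +
      tr (x * (σ a * b ^ 2 + σ b * a ^ 2)) + tr (σ x * (a * b ^ 2 + b * a ^ 2)) := by
  have move_σ : tr (σ x * (a * b ^ 2 + b * a ^ 2)) = tr (x * (σ a * σ b ^ 2 + σ b * σ a ^ 2)) := by
    rw [← tr_map σ, map_mul, hσ]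
    simp only [map_add, map_mul, map_pow]
  rw [move_σ, add_assoc, ← tr_add, ← tr_sq (_ + _), ← tr_add, polarMap_apply, relTrace_apply,
    relTrace_apply, CharTwo.add_sq b, CharTwo.add_sq a]
  ring_nf

theorem der_der_tr_map_mul_pow_three {σ : Fq n →+* Fq n} (hσ : Function.Involutive σ)
    {f : Fq n → ZMod 2} (hf : ∀ x, f x = tr (σ x * x ^ 3)) (a b x : Fq n) :
    der (der f a) b x = der (der f a) b 0 + tr (x ^ 2 * polarMap σ a b) := by
  rw [tr_sq_mul_polarMap hσ]
  simp only [der, hf, ← tr_add, zero_add, map_mul_pow_three_polarization σ a b x]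

theorem linKer_der_tr_map_mul_pow_three {σ : Fq n →+* Fq n} (hσ : Function.Involutive σ)
    {f : Fq n → ZMod 2} (hf : ∀ x, f x = tr (σ x * x ^ 3)) (a : Fq n) :
    linKer (der f a) = (polarMap σ a).ker := by
  ext b
  exact mem_linKer_iff_of_der_eq_add_tr (bijective_frobenius (Fq n) 2).surjective
    (der_der_tr_map_mul_pow_three hσ hf a b)

end LinearKernel

/-- Linear-kernel sizes for derivatives of `tr(x^(2^r+3))`, `n = 2r`, odd `r`. -/
theorem linKer_card_der_odd_r (r n : ℕ) (hr : 0 < r) (hrodd : Odd r) (hn : n = 2 * r)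
    (f : Fq n → ZMod 2) (hf : ∀ x, f x = tr (x ^ (2 ^ r + 3))) :
    ∀ a : Fq n, a ≠ 0 →
      (a ^ (2 ^ r) = a → (linKer (der f a)).ncard = 2 ^ (r + 1)) ∧
      (a ^ (2 ^ r) ≠ a → (linKer (der f a)).ncard = 4) := by
  subst hn
  have card_F : Nat.card (Fq (2 * r)) = 2 ^ (2 * r) := GaloisField.card 2 _ (by omega)
  set σ := iterateFrobenius (Fq (2 * r)) 2 r
  have σ_apply (x : Fq (2 * r)) : σ x = x ^ 2 ^ r := iterateFrobenius_def 2 r x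
  have hσ : Function.Involutive σ := iterateFrobenius_involutive card_F
  have hσ_ne : σ ≠ RingHom.id _ :=
    iterateFrobenius_ne_id hr.ne' (card_F ▸ Nat.pow_lt_pow_right one_lt_two (by omega))
  have card_ker : Nat.card (relTrace σ).ker = 2 ^ r :=
    card_ker_relTrace_iterateFrobenius hr.ne' card_F
  have hf_σ (x : Fq (2 * r)) : f x = tr (σ x * x ^ 3) := by rw [hf, σ_apply, pow_add]
  intro a ha
  rw [linKer_der_tr_map_mul_pow_three hσ hf_σ, ← σ_apply]
  refine ⟨fun haK => ?_, ncard_ker_polarMap_of_map_ne hσ⟩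
  have hcop : (Nat.card (relTrace σ).ker - 1).Coprime 3 :=
    card_ker ▸ coprime_two_pow_sub_one_three hrodd
  rw [ncard_ker_polarMap_of_map_eq hσ hσ_ne hcop ha haK, card_ker, pow_succ']
end
end

section
/- Let n be an even positive integer, and let a, b ∈ F with a ≠ 0 and b ∉ {0, 1}. If the equation R_{a,b}(x) = 0 has exactly 4 solutions x ∈ F, then the equation P_{a,b}(x) = 0 has at most 16 solutions x ∈ F. -/
noncomputable section

/-- The polynomial map `R_{a,b}` from the paper. -/
def Rpoly {n : ℕ} (a b x : Fq n) : Fq n :=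
  a ^ 30 * (b ^ 2 + b) ^ 6 * ((x ^ 2 + x) ^ 2 + (x ^ 2 + x) * (b ^ 2 + b)) ^ 4
    + a ^ 15 * (b ^ 2 + b) ^ 5 * ((x ^ 2 + x) ^ 2 + (x ^ 2 + x) * (b ^ 2 + b))

/-- The polynomial map `Q_{a,b}` from the paper. -/
def Qpoly {n : ℕ} (a b x : Fq n) : Fq n :=
  ((b ^ 2 + b)⁻¹) ^ 4 * Rpoly a b x * (Rpoly a b x + 1)

/-- The polynomial map `P_{a,b}` from the paper. -/
def Ppoly {n : ℕ} (a b x : Fq n) : Fq n :=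
  Qpoly a b x * (Qpoly a b x + 1)

/-!
In characteristic two the Artin–Schreier map `℘ x = x ^ 2 + x` is additive with kernel `{0, 1}`.
Since `R` is additive and `Q = (b ^ 2 + b)⁻⁴ ℘(R)`, the map `P = ℘(Q)` is additive too, being
`R` followed by `℘`, an invertible scaling, and `℘`. Each `℘` at most doubles the kernel.
-/

section KernelOfComposition

variable {G H K : Type*} [AddGroup G] [AddGroup H] [AddZeroClass K]

theorem card_ker_comp_dvd (g : H →+ K) (f : G →+ H) :
    Nat.card (g.comp f).ker ∣ Nat.card g.ker * Nat.card f.ker := by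
  have ker_le : f.ker ≤ (g.comp f).ker := by
    rw [← AddMonoidHom.comap_ker]
    exact AddSubgroup.ker_le_comap f g.ker
  have map_le : (g.comp f).ker.map f ≤ g.ker := by
    rw [← AddMonoidHom.comap_ker]
    exact AddSubgroup.map_comap_le f g.ker
  have card_eq : Nat.card (g.comp f).ker =
      Nat.card ((g.comp f).ker.map f) * Nat.card f.ker := by
    rw [← AddSubgroup.relIndex_ker, mul_comm, ← AddSubgroup.relIndex_bot_left f.ker,
      AddSubgroup.relIndex_mul_relIndex _ _ _ bot_le ker_le, AddSubgroup.relIndex_bot_left]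
  rw [card_eq]
  exact Nat.mul_dvd_mul_right (AddSubgroup.card_dvd_of_le map_le) _

end KernelOfComposition

section ArtinSchreier

/-- The Artin–Schreier map `x ↦ x ^ 2 - x` in characteristic two, as an additive homomorphism.
It is written with `+`, as in the definitions of `Qpoly` and `Ppoly`. -/
def artinSchreier (K : Type*) [CommSemiring K] [CharP K 2] : K →+ K where
  toFun x := x ^ 2 + x
  map_zero' := by simp
  map_add' x y := by rw [CharTwo.add_sq, add_add_add_comm]

theorem artinSchreier_apply {K : Type*} [CommSemiring K] [CharP K 2] (x : K) :
    artinSchreier K x = x ^ 2 + x :=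
  rfl

variable {K : Type*} [CommRing K] [IsDomain K] [CharP K 2]

theorem artinSchreier_eq_zero_iff {x : K} : artinSchreier K x = 0 ↔ x = 0 ∨ x = 1 := by
  rw [artinSchreier_apply, sq, ← mul_add_one, mul_eq_zero, CharTwo.add_eq_zero]

theorem card_ker_artinSchreier : Nat.card (artinSchreier K).ker = 2 := by
  have ker_eq : ((artinSchreier K).ker : Set K) = {0, 1} :=
    Set.ext fun _ ↦ artinSchreier_eq_zero_iff
  calc Nat.card (artinSchreier K).ker
      = ((artinSchreier K).ker : Set K).ncard := Nat.card_coe_set_eq _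
    _ = 2 := by rw [ker_eq, Set.ncard_pair zero_ne_one]

theorem card_ker_artinSchreier_comp_dvd {G : Type*} [AddGroup G] (f : G →+ K) :
    Nat.card ((artinSchreier K).comp f).ker ∣ 2 * Nat.card f.ker := by
  simpa only [card_ker_artinSchreier] using card_ker_comp_dvd (artinSchreier K) f

theorem card_ker_artinSchreier_mulLeft_artinSchreier_comp_dvd {G : Type*} [AddGroup G]
    {d : K} (hd : d ≠ 0) (f : G →+ K) :
    Nat.card ((artinSchreier K).comp
      ((AddMonoidHom.mulLeft d).comp ((artinSchreier K).comp f))).ker ∣ 4 * Nat.card f.ker := by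
  have scaling_injective : Function.Injective (AddMonoidHom.mulLeft d) :=
    mul_right_injective₀ hd
  calc _ ∣ 2 * Nat.card ((AddMonoidHom.mulLeft d).comp ((artinSchreier K).comp f)).ker :=
        card_ker_artinSchreier_comp_dvd _
    _ = 2 * Nat.card ((artinSchreier K).comp f).ker := by
        rw [AddMonoidHom.ker_comp_of_injective _ _ scaling_injective]
    _ ∣ 2 * (2 * Nat.card f.ker) := mul_dvd_mul_left 2 (card_ker_artinSchreier_comp_dvd f)
    _ = 4 * Nat.card f.ker := by ring

end ArtinSchreier

section Polynomials

variable {n : ℕ} (a b : Fq n)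

theorem Rpoly_add (x y : Fq n) : Rpoly a b (x + y) = Rpoly a b x + Rpoly a b y := by
  have add_pow_four (u v : Fq n) : (u + v) ^ 4 = u ^ 4 + v ^ 4 := add_pow_char_pow u v 2 2
  have inner_add :
      ((x + y) ^ 2 + (x + y)) ^ 2 + ((x + y) ^ 2 + (x + y)) * (b ^ 2 + b) =
        ((x ^ 2 + x) ^ 2 + (x ^ 2 + x) * (b ^ 2 + b)) +
          ((y ^ 2 + y) ^ 2 + (y ^ 2 + y) * (b ^ 2 + b)) := by
    simp only [CharTwo.add_sq]
    ring
  rw [Rpoly, inner_add, add_pow_four, Rpoly, Rpoly]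
  ring

/-- The map `R_{a,b}` as an additive endomorphism of `Fq n`, so that its roots form a kernel. -/
def RpolyHom : Fq n →+ Fq n :=
  AddMonoidHom.mk' (Rpoly a b) (Rpoly_add a b)

theorem Ppoly_eq_artinSchreier (x : Fq n) :
    Ppoly a b x = artinSchreier (Fq n)
      (((b ^ 2 + b)⁻¹) ^ 4 * artinSchreier (Fq n) (Rpoly a b x)) := by
  simp only [Ppoly, Qpoly, artinSchreier_apply]
  ring

end Polynomials

theorem Ppoly_roots_le_sixteen_general {n : ℕ} (a b : Fq n) (hb0 : b ≠ 0) (hb1 : b ≠ 1) :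
    {x : Fq n | Ppoly a b x = 0}.ncard ∣ 4 * {x : Fq n | Rpoly a b x = 0}.ncard := by
  have scale_ne_zero : ((b ^ 2 + b)⁻¹) ^ 4 ≠ 0 :=
    pow_ne_zero 4 (inv_ne_zero (mt artinSchreier_eq_zero_iff.mp (not_or.mpr ⟨hb0, hb1⟩)))
  simp only [Ppoly_eq_artinSchreier, ← Nat.card_coe_set_eq]
  exact card_ker_artinSchreier_mulLeft_artinSchreier_comp_dvd scale_ne_zero (RpolyHom a b)

/-- Even `n`: exactly 4 roots of `R_{a,b}` implies at most 16 roots of `P_{a,b}`. -/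
theorem Ppoly_roots_le_sixteen (n : ℕ) (hn : 0 < n) (hev : Even n)
    (a b : Fq n) (ha : a ≠ 0) (hb0 : b ≠ 0) (hb1 : b ≠ 1)
    (hR : {x : Fq n | Rpoly a b x = 0}.ncard = 4) :
    {x : Fq n | Ppoly a b x = 0}.ncard ≤ 16 := by
  have card_dvd : {x : Fq n | Ppoly a b x = 0}.ncard ∣ 16 := by
    simpa only [hR] using Ppoly_roots_le_sixteen_general a b hb0 hb1
  exact Nat.le_of_dvd (by norm_num) card_dvd
end
end
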